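/- arXiv:0804.1715 — 5 statements merged into one kernel-verified Lean document; each statement's English description precedes it below -/
import Mathlib

section
/- For every S ∈ Σ_L, the integral ∫_{−∞}^{+∞} exp(2∫_0^y S(z) dz) dy is finite and strictly positive; consequently the ergodic density q_S(x) = exp(2∫_0^x S(z) dz) / ∫_{−∞}^{+∞} exp(2∫_0^y S(z) dz) dy is well defined and satisfies ∫_{−∞}^{+∞} q_S(x) dx = 1. -/
open MeasureTheory Real Set Filter

noncomputable section

/-- `f` is Lipschitz with constant `L` and continuous. -/
def IsLip (L : ℝ) (f : ℝ → ℝ) : Prop :=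
  Continuous f ∧ ∀ x y : ℝ, |f x - f y| ≤ L * |x - y|

/-- The functional class `Σ_L`. -/
def SigmaL (L : ℝ) (S : ℝ → ℝ) : Prop :=
  IsLip L S ∧ (∀ z : ℝ, |z| ≤ L → |S z| ≤ L) ∧
  ∃ S' : ℝ → ℝ, ContinuousOn S' {x : ℝ | L ≤ |x|} ∧
    ∀ x : ℝ, L ≤ |x| → HasDerivAt S (S' x) x ∧ -L ≤ S' x ∧ S' x ≤ -(1/L)

/-- Normalizing constant of the ergodic density. -/
def qdenom (S : ℝ → ℝ) : ℝ := ∫ y : ℝ, Real.exp (2 * ∫ z in (0:ℝ)..y, S z)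

/-- The ergodic density `q_S`. -/
def qdens (S : ℝ → ℝ) (x : ℝ) : ℝ :=
  Real.exp (2 * ∫ z in (0:ℝ)..x, S z) / qdenom S

/-- `J(S) = ∫_a^b 1/q_S(u) du`. -/
def Jfun (a b : ℝ) (S : ℝ → ℝ) : ℝ := ∫ u in a..b, 1 / qdens S u

end

/-!
The bounds `S' ≤ -1/L < 0` on `|x| ≥ L` force `S → -∞` at `+∞` and `S → +∞` at `-∞`. So the
drift `S` eventually points towards the origin with strength bounded below, and integrating this
bound shows that `exp (2 ∫₀ʸ S)` decays exponentially at both ends of the line.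
-/

open Asymptotics

section Primitive

variable {f : ℝ → ℝ} {c d : ℝ} (a : ℝ)

theorem isBigO_exp_integral_atTop (hf : ∀ x y, IntervalIntegrable f volume x y)
    (hfc : ∀ᶠ x in atTop, f x ≤ c) :
    (fun y => exp (∫ x in a..y, f x)) =O[atTop] fun y => exp (c * y) := by
  obtain ⟨b, hb⟩ := eventually_atTop.1 hfc
  refine isBigO_exp_comp_exp_comp.2 <|
    isBoundedUnder_of_eventually_le (a := (∫ x in a..b, f x) - c * b) ?_
  filter_upwards [eventually_ge_atTop b] with y hby
  have tail_le : ∫ x in b..y, f x ≤ c * (y - b) := calc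
    ∫ x in b..y, f x ≤ ∫ _ in b..y, c :=
      intervalIntegral.integral_mono_on hby (hf b y) intervalIntegrable_const
        fun x hx => hb x hx.1
    _ = c * (y - b) := by rw [intervalIntegral.integral_const, smul_eq_mul, mul_comm]
  have split := intervalIntegral.integral_add_adjacent_intervals (hf a b) (hf b y)
  rw [Pi.sub_apply]
  linarith

theorem isBigO_exp_integral_atBot (hf : ∀ x y, IntervalIntegrable f volume x y)
    (hfd : ∀ᶠ x in atBot, d ≤ f x) :
    (fun y => exp (∫ x in a..y, f x)) =O[atBot] fun y => exp (d * y) := by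
  have hf_neg : ∀ x y, IntervalIntegrable (fun x => -f (-x)) volume x y := fun x y => by
    simpa using! ((IntervalIntegrable.iff_comp_neg (by simp)).1 (hf (-x) (-y))).neg
  have hfd_neg : ∀ᶠ x in atTop, -f (-x) ≤ -d :=
    (tendsto_neg_atTop_atBot.eventually hfd).mono fun _ => neg_le_neg
  have reflected := (isBigO_exp_integral_atTop (-a) hf_neg hfd_neg).comp_tendsto
    tendsto_neg_atBot_atTop
  simpa [Function.comp_def, intervalIntegral.integral_comp_neg,
    ← intervalIntegral.integral_symm] using reflected

theorem integrable_exp_integral (hf : ∀ x y, IntervalIntegrable f volume x y)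
    (hc : c < 0) (hfc : ∀ᶠ x in atTop, f x ≤ c) (hd : 0 < d) (hfd : ∀ᶠ x in atBot, d ≤ f x) :
    Integrable fun y => exp (∫ x in a..y, f x) := by
  have continuous_density : Continuous fun y => exp (∫ x in a..y, f x) :=
    continuous_exp.comp (intervalIntegral.continuous_primitive hf a)
  exact continuous_density.locallyIntegrable.integrable_of_isBigO_atBot_atTop
    (isBigO_exp_integral_atBot a hf hfd) ⟨Iic 0, Iic_mem_atBot 0, integrableOn_exp_mul_Iic hd 0⟩
    (isBigO_exp_integral_atTop a hf hfc) ⟨Ioi 0, Ioi_mem_atTop 0, integrableOn_exp_mul_Ioi hc 0⟩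

end Primitive

section Deriv

variable {f : ℝ → ℝ} {c : ℝ}

theorem tendsto_atTop_atBot_of_deriv_le (hc : c < 0)
    (hf : ∀ᶠ x in atTop, DifferentiableAt ℝ f x) (hfc : ∀ᶠ x in atTop, deriv f x ≤ c) :
    Tendsto f atTop atBot := by
  obtain ⟨b, hb⟩ := eventually_atTop.1 (hf.and hfc)
  have le_line : ∀ x ≥ b, f x ≤ f b - c * b + c * x := fun x hx => by
    have := (convex_Ici b).image_sub_le_mul_sub_of_deriv_le
      (fun y hy => (hb y hy).1.continuousAt.continuousWithinAt)
      (fun y hy => (hb y (interior_subset hy)).1.differentiableWithinAt)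
      (fun y hy => (hb y (interior_subset hy)).2) b self_mem_Ici x hx hx
    linarith
  exact tendsto_atBot_mono' atTop ((eventually_ge_atTop b).mono le_line) <|
    tendsto_atBot_add_const_left _ _ (tendsto_id.const_mul_atTop_of_neg hc)

theorem tendsto_atBot_atTop_of_deriv_le (hc : c < 0)
    (hf : ∀ᶠ x in atBot, DifferentiableAt ℝ f x) (hfc : ∀ᶠ x in atBot, deriv f x ≤ c) :
    Tendsto f atBot atTop := by
  have reflected : Tendsto (fun x => -f (-x)) atTop atBot :=
    tendsto_atTop_atBot_of_deriv_le hc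
      ((tendsto_neg_atTop_atBot.eventually hf).mono fun x hx =>
        (hx.comp x differentiableAt_id.neg).neg)
      ((tendsto_neg_atTop_atBot.eventually hfc).mono fun x hx => by
        simpa [deriv_comp_neg] using hx)
  simpa [Function.comp_def] using
    tendsto_neg_atBot_atTop.comp (reflected.comp tendsto_neg_atBot_atTop)

end Deriv

namespace SigmaL

variable {L : ℝ} {S : ℝ → ℝ}

theorem intervalIntegrable (hS : SigmaL L S) (x y : ℝ) : IntervalIntegrable S volume x y :=
  hS.1.1.intervalIntegrable x y

theorem differentiableAt (hS : SigmaL L S) {x : ℝ} (hx : L ≤ |x|) : DifferentiableAt ℝ S x := by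
  obtain ⟨-, -, S', -, hS'⟩ := hS
  exact (hS' x hx).1.differentiableAt

theorem deriv_le (hS : SigmaL L S) {x : ℝ} (hx : L ≤ |x|) : deriv S x ≤ -(1 / L) := by
  obtain ⟨-, -, S', -, hS'⟩ := hS
  obtain ⟨hderiv, -, hle⟩ := hS' x hx
  rwa [hderiv.deriv]

theorem tendsto_atTop_atBot (hL : 0 < L) (hS : SigmaL L S) : Tendsto S atTop atBot := by
  have far : ∀ᶠ x : ℝ in atTop, L ≤ |x| := tendsto_abs_atTop_atTop.eventually_ge_atTop L
  exact tendsto_atTop_atBot_of_deriv_le (neg_neg_of_pos (one_div_pos.2 hL))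
    (far.mono fun _ => hS.differentiableAt) (far.mono fun _ => hS.deriv_le)

theorem tendsto_atBot_atTop (hL : 0 < L) (hS : SigmaL L S) : Tendsto S atBot atTop := by
  have far : ∀ᶠ x : ℝ in atBot, L ≤ |x| := tendsto_abs_atBot_atTop.eventually_ge_atTop L
  exact tendsto_atBot_atTop_of_deriv_le (neg_neg_of_pos (one_div_pos.2 hL))
    (far.mono fun _ => hS.differentiableAt) (far.mono fun _ => hS.deriv_le)

end SigmaL

theorem integral_qdens {S : ℝ → ℝ} (hS : qdenom S ≠ 0) : ∫ x, qdens S x = 1 := by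
  simp only [qdens, integral_div]
  exact div_self hS

theorem stmt1_general {S : ℝ → ℝ} {c d : ℝ} (hS : ∀ x y, IntervalIntegrable S volume x y)
    (hc : c < 0) (hSc : ∀ᶠ x in atTop, S x ≤ c) (hd : 0 < d) (hSd : ∀ᶠ x in atBot, d ≤ S x) :
    Integrable (fun y => exp (2 * ∫ z in (0 : ℝ)..y, S z)) ∧
    0 < qdenom S ∧
    ∫ x, qdens S x = 1 := by
  have integrable : Integrable fun y => exp (2 * ∫ z in (0 : ℝ)..y, S z) := by
    simp only [← intervalIntegral.integral_const_mul]
    exact integrable_exp_integral 0 (fun x y => (hS x y).const_mul 2)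
      (mul_neg_of_pos_of_neg two_pos hc) (hSc.mono fun x hx => by gcongr)
      (mul_pos two_pos hd) (hSd.mono fun x hx => by gcongr)
  have qdenom_pos : 0 < qdenom S := integral_exp_pos integrable
  exact ⟨integrable, qdenom_pos, integral_qdens qdenom_pos.ne'⟩

/-- For every `S ∈ Σ_L` the integral `∫ exp(2∫_0^y S) dy` is finite
(i.e. the integrand is integrable) and strictly positive, and the ergodic density
`q_S` integrates to 1. -/
theorem stmt1 (L : ℝ) (hL : 1 ≤ L) (S : ℝ → ℝ) (hS : SigmaL L S) :
    MeasureTheory.Integrable (fun y : ℝ => Real.exp (2 * ∫ z in (0:ℝ)..y, S z)) ∧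
    0 < qdenom S ∧
    ∫ x : ℝ, qdens S x = 1 := by
  have hL₀ : 0 < L := zero_lt_one.trans_le hL
  exact stmt1_general hS.intervalIntegrable
    neg_one_lt_zero ((hS.tendsto_atTop_atBot hL₀).eventually_le_atBot _)
    one_pos ((hS.tendsto_atBot_atTop hL₀).eventually_ge_atTop _)
end

section
/- Let k ≥ 1 be an integer and let f : [a,b] → ℝ be k times continuously differentiable with f^{(i)}(a) = f^{(i)}(b) for all 0 ≤ i ≤ k. Let θ_j = ∫_a^b f(x) φ_j(x) dx be its Fourier coefficients and ϖ_j = Σ_{i=0}^k (2π⌊j/2⌋/(b−a))^{2i} (with the convention 0^0 = 1). Then Σ_{i=0}^k ∫_a^b (f^{(i)}(x))² dx = Σ_{j=1}^∞ ϖ_j θ_j². -/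
open MeasureTheory Real Set Filter

noncomputable section

/-- The standard trigonometric basis `(φ_j)_{j ≥ 1}` of `L²[a,b]`. -/
def phiB (a b : ℝ) (j : ℕ) (x : ℝ) : ℝ :=
  if j = 1 then 1 / Real.sqrt (b - a)
  else Real.sqrt (2 / (b - a)) *
    (if Even j then Real.cos (2 * Real.pi * ((j / 2 : ℕ) : ℝ) * (x - a) / (b - a))
     else Real.sin (2 * Real.pi * ((j / 2 : ℕ) : ℝ) * (x - a) / (b - a)))

/-- `ϖ_j = Σ_{i=0}^k (2π⌊j/2⌋/(b−a))^{2i}` (with `0^0 = 1`). -/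
def varpi (a b : ℝ) (k : ℕ) (j : ℕ) : ℝ :=
  ∑ i ∈ Finset.range (k + 1), (2 * Real.pi * ((j / 2 : ℕ) : ℝ) / (b - a)) ^ (2 * i)

end

/-! A function on `[a, b]` whose derivatives match at the endpoints can be integrated by parts with
no boundary terms, so differentiating multiplies its `n`-th Fourier coefficient `c_n` by `i ω_n`,
where `ω_n = 2πn / (b - a)`. Parseval's identity for `f, f', …, f^(k)` then gives
`∑_{i ≤ k} ∫ |f^(i)|² = (b - a) ∑_{n ∈ ℤ} (∑_{i ≤ k} ω_n^{2i}) |c_n|²`. Up to a common factor and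
unimodular phases, `c_{±m}` is `C_m ∓ i S_m` with `C_m`, `S_m` the cosine and sine integrals of `f`,
so the parallelogram law turns the pair of terms `±m` into the pair `θ_{2m}`, `θ_{2m+1}`, while
`n = 0` gives `θ_1`. Nothing here needs `c_{-m}` to be the conjugate of `c_m`, so `f` may be
complex-valued. -/

/-- The angular frequency `ω_n = 2πn / (b - a)` of the `n`-th Fourier mode on `[a, b]`. -/
noncomputable def angularFreq (a b : ℝ) (n : ℤ) : ℝ := 2 * π * n / (b - a)

/-- The weight `∑_{i ≤ k} ω^{2i}` by which the squared Sobolev norm of order `k` multiplies the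
energy of a mode of angular frequency `ω`, with `0 ^ 0 = 1`. -/
noncomputable def sobolevWeight (k : ℕ) (ω : ℝ) : ℝ := ∑ i ∈ Finset.range (k + 1), ω ^ (2 * i)

/-- The cosine integral of `f` over `[a, b]` at angular frequency `ω`, with phase zero at `a` as in
`phiB`. -/
noncomputable def cosIntegral (a b : ℝ) (f : ℝ → ℂ) (ω : ℝ) : ℂ :=
  ∫ x in a..b, f x * (cos (ω * (x - a)) : ℝ)

/-- The sine integral of `f` over `[a, b]` at angular frequency `ω`, with phase zero at `a` as in
`phiB`. -/
noncomputable def sinIntegral (a b : ℝ) (f : ℝ → ℂ) (ω : ℝ) : ℂ :=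
  ∫ x in a..b, f x * (sin (ω * (x - a)) : ℝ)

/-- The coefficient `θ_j` of a complex-valued function in the trigonometric basis `phiB`. -/
noncomputable def trigCoeff (a b : ℝ) (f : ℝ → ℂ) (j : ℕ) : ℂ :=
  ∫ x in a..b, f x * (phiB a b j x : ℝ)

lemma hasSum_of_hasSum_even_add_odd {u : ℕ → ℝ} {s : ℝ} (hu : ∀ n, 0 ≤ u n)
    (h : HasSum (fun m ↦ u (2 * m) + u (2 * m + 1)) s) : HasSum u s := by
  have heven : Summable fun m ↦ u (2 * m) :=
    .of_nonneg_of_le (fun m ↦ hu _) (fun m ↦ le_add_of_nonneg_right (hu _)) h.summable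
  have hodd : Summable fun m ↦ u (2 * m + 1) :=
    .of_nonneg_of_le (fun m ↦ hu _) (fun m ↦ le_add_of_nonneg_left (hu _)) h.summable
  rw [h.unique (heven.hasSum.add hodd.hasSum)]
  exact heven.hasSum.even_add_odd hodd.hasSum

lemma hasSum_int_pair_succ {E : Type*} [AddCommGroup E] [TopologicalSpace E]
    [IsTopologicalAddGroup E] {g : ℤ → E} {s : E} (hg : HasSum g s) :
    HasSum (fun m : ℕ ↦ g ↑(m + 1) + g (-↑(m + 1))) (s - g 0) := by
  simpa using (hasSum_nat_add_iff' 1).2 hg.nat_add_neg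

lemma hasSum_nat_of_hasSum_int_pairs {g : ℤ → ℝ} {u : ℕ → ℝ} {s : ℝ} (hg : HasSum g s)
    (hu : ∀ n, 0 ≤ u n) (hzero : u 0 = g 0)
    (hpair : ∀ m : ℕ, u (2 * m + 1) + u (2 * m + 2) = g ↑(m + 1) + g (-↑(m + 1))) :
    HasSum u s := by
  have htail : HasSum (fun n ↦ u (n + 1)) (s - g 0) :=
    hasSum_of_hasSum_even_add_odd (fun n ↦ hu _) (funext hpair ▸ hasSum_int_pair_succ hg)
  rw [← hasSum_nat_add_iff' 1]
  simpa [hzero] using htail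

lemma memLp_restrict_Ioc_of_continuousOn {E : Type*} [NormedAddCommGroup E] {a b : ℝ}
    {g : ℝ → E} (hg : ContinuousOn g (Icc a b)) (p : ENNReal) :
    MemLp g p (volume.restrict (Ioc a b)) := by
  obtain ⟨C, hC⟩ := isCompact_Icc.exists_bound_of_continuousOn hg
  refine .of_bound ((hg.mono Ioc_subset_Icc_self).aestronglyMeasurable measurableSet_Ioc) C ?_
  exact ae_restrict_of_forall_mem measurableSet_Ioc fun x hx ↦ hC x (Ioc_subset_Icc_self hx)

lemma iteratedDerivWithin_continuousLinearMap_comp {𝕜 F G : Type*} [NontriviallyNormedField 𝕜]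
    [NormedAddCommGroup F] [NormedSpace 𝕜 F] [NormedAddCommGroup G] [NormedSpace 𝕜 G]
    (L : F →L[𝕜] G) {f : 𝕜 → F} {s : Set 𝕜} {n : WithTop ℕ∞} (hf : ContDiffOn 𝕜 n f s)
    (hs : UniqueDiffOn 𝕜 s) {x : 𝕜} (hx : x ∈ s) {i : ℕ} (hi : i ≤ n) :
    iteratedDerivWithin i (fun y ↦ L (f y)) s x = L (iteratedDerivWithin i f s x) := by
  simp only [iteratedDerivWithin]
  exact DFunLike.congr_fun (L.iteratedFDerivWithin_comp_left (hf x hx) hs hx hi) _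

lemma hasDerivAt_iteratedDerivWithin_Icc {E : Type*} [NormedAddCommGroup E] [NormedSpace ℝ E]
    {f : ℝ → E} {a b x : ℝ} {n : WithTop ℕ∞} {i : ℕ} (hf : ContDiffOn ℝ n f (Icc a b))
    (hi : i < n) (hx : x ∈ Ioo a b) :
    HasDerivAt (iteratedDerivWithin i f (Icc a b))
      (iteratedDerivWithin (i + 1) f (Icc a b) x) x := by
  have hu : UniqueDiffOn ℝ (Icc a b) := uniqueDiffOn_Icc (hx.1.trans hx.2)
  rw [iteratedDerivWithin_succ]
  exact (hf.differentiableOn_iteratedDerivWithin hi hu x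
    (Ioo_subset_Icc_self hx)).hasDerivWithinAt.hasDerivAt (Icc_mem_nhds hx.1 hx.2)

section Fourier

variable {a b : ℝ} (hab : a < b)

lemma fourierCoeffOn_deriv_of_eq {f f' : ℝ → ℂ} (hf : ContinuousOn f (Icc a b))
    (hderiv : ∀ x ∈ Ioo a b, HasDerivAt f (f' x) x) (hf' : IntervalIntegrable f' volume a b)
    (hper : f a = f b) (n : ℤ) :
    fourierCoeffOn hab f' n = angularFreq a b n * Complex.I * fourierCoeffOn hab f n := by
  rcases eq_or_ne n 0 with rfl | hn
  · have hint : ∫ x in a..b, f' x = 0 := by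
      rw [intervalIntegral.integral_eq_sub_of_hasDerivAt_of_le hab.le hf hderiv hf', hper, sub_self]
    simp [fourierCoeffOn_eq_integral, angularFreq, hint]
  · have hparts := fourierCoeffOn_of_hasDerivAt_Ioo hab hn (by rwa [uIcc_of_le hab.le])
      (by rwa [min_eq_left hab.le, max_eq_right hab.le]) hf'
    rw [hper, sub_self, mul_zero, zero_sub] at hparts
    have hlen : (b : ℂ) - a ≠ 0 := by exact_mod_cast (sub_pos.2 hab).ne'
    rw [hparts, angularFreq]
    push_cast
    field_simp

lemma fourierCoeffOn_iteratedDerivWithin {k : ℕ} {f : ℝ → ℂ} (hf : ContDiffOn ℝ k f (Icc a b))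
    (hper : ∀ i < k, iteratedDerivWithin i f (Icc a b) a = iteratedDerivWithin i f (Icc a b) b)
    (n : ℤ) {i : ℕ} (hi : i ≤ k) :
    fourierCoeffOn hab (iteratedDerivWithin i f (Icc a b)) n =
      (angularFreq a b n * Complex.I) ^ i * fourierCoeffOn hab f n := by
  have hcont {j : ℕ} (hj : j ≤ k) : ContinuousOn (iteratedDerivWithin j f (Icc a b)) (Icc a b) :=
    hf.continuousOn_iteratedDerivWithin (by exact_mod_cast hj) (uniqueDiffOn_Icc hab)
  induction i with
  | zero => simp
  | succ i ih =>
    have hderiv (x : ℝ) (hx : x ∈ Ioo a b) :=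
      hasDerivAt_iteratedDerivWithin_Icc hf (by exact_mod_cast hi : (i : WithTop ℕ∞) < k) hx
    rw [fourierCoeffOn_deriv_of_eq hab (hcont (Nat.le_of_succ_le hi)) hderiv
      ((hcont hi).intervalIntegrable_of_Icc hab.le) (hper i hi), ih (Nat.le_of_succ_le hi),
      pow_succ']
    ring

lemma hasSum_angularFreq_pow_mul_norm_sq_fourierCoeffOn {k : ℕ} {f : ℝ → ℂ}
    (hf : ContDiffOn ℝ k f (Icc a b))
    (hper : ∀ i < k, iteratedDerivWithin i f (Icc a b) a = iteratedDerivWithin i f (Icc a b) b)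
    {i : ℕ} (hi : i ≤ k) :
    HasSum
      (fun n : ℤ ↦ angularFreq a b n ^ (2 * i) * ((b - a) * ‖fourierCoeffOn hab f n‖ ^ 2))
      (∫ x in a..b, ‖iteratedDerivWithin i f (Icc a b) x‖ ^ 2) := by
  have hcont : ContinuousOn (iteratedDerivWithin i f (Icc a b)) (Icc a b) :=
    hf.continuousOn_iteratedDerivWithin (by exact_mod_cast hi) (uniqueDiffOn_Icc hab)
  have hparseval := (hasSum_sq_fourierCoeffOn hab
    (memLp_restrict_Ioc_of_continuousOn hcont 2)).mul_left (b - a)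
  rw [smul_eq_mul, mul_inv_cancel_left₀ (sub_pos.2 hab).ne'] at hparseval
  have hcoeff (n : ℤ) : ‖fourierCoeffOn hab (iteratedDerivWithin i f (Icc a b)) n‖ ^ 2 =
      angularFreq a b n ^ (2 * i) * ‖fourierCoeffOn hab f n‖ ^ 2 := by
    rw [fourierCoeffOn_iteratedDerivWithin hab hf hper n hi, norm_mul, norm_pow, norm_mul,
      Complex.norm_I, mul_one, Complex.norm_real, norm_eq_abs, mul_pow, ← pow_mul, mul_comm i 2,
      (even_two_mul i).pow_abs]
  simpa only [hcoeff, mul_left_comm (b - a)] using hparseval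

lemma hasSum_sobolevWeight_mul_norm_sq_fourierCoeffOn {k : ℕ} {f : ℝ → ℂ}
    (hf : ContDiffOn ℝ k f (Icc a b))
    (hper : ∀ i < k, iteratedDerivWithin i f (Icc a b) a = iteratedDerivWithin i f (Icc a b) b) :
    HasSum
      (fun n : ℤ ↦
        sobolevWeight k (angularFreq a b n) * ((b - a) * ‖fourierCoeffOn hab f n‖ ^ 2))
      (∑ i ∈ Finset.range (k + 1), ∫ x in a..b, ‖iteratedDerivWithin i f (Icc a b) x‖ ^ 2) := by
  simp only [sobolevWeight, Finset.sum_mul]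
  exact hasSum_sum fun i hi ↦ hasSum_angularFreq_pow_mul_norm_sq_fourierCoeffOn hab hf hper
    (Finset.mem_range_succ_iff.1 hi)

end Fourier

section Trigonometric

variable {a b : ℝ} {f : ℝ → ℂ}

lemma angularFreq_neg (n : ℤ) : angularFreq a b (-n) = -angularFreq a b n := by
  simp [angularFreq, neg_div]

lemma sobolevWeight_neg (k : ℕ) (ω : ℝ) : sobolevWeight k (-ω) = sobolevWeight k ω := by
  simp only [sobolevWeight, (even_two_mul _).neg_pow]

lemma sobolevWeight_nonneg (k : ℕ) (ω : ℝ) : 0 ≤ sobolevWeight k ω :=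
  Finset.sum_nonneg fun _ _ ↦ (even_two_mul _).pow_nonneg ω

lemma varpi_eq_sobolevWeight (k j : ℕ) :
    varpi a b k j = sobolevWeight k (angularFreq a b (j / 2 : ℕ)) := by
  simp only [varpi, sobolevWeight, angularFreq, Int.cast_natCast]

lemma cosIntegral_neg (ω : ℝ) : cosIntegral a b f (-ω) = cosIntegral a b f ω := by
  simp [cosIntegral]

lemma sinIntegral_neg (ω : ℝ) : sinIntegral a b f (-ω) = -sinIntegral a b f ω := by
  simp [sinIntegral]

lemma cosIntegral_sub_sinIntegral_mul_I (hf : IntervalIntegrable f volume a b) (ω : ℝ) :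
    cosIntegral a b f ω - sinIntegral a b f ω * Complex.I =
      ∫ x in a..b, f x * Complex.exp (-(ω * (x - a) : ℝ) * Complex.I) := by
  have hcos : IntervalIntegrable (fun x ↦ f x * (cos (ω * (x - a)) : ℝ)) volume a b :=
    hf.mul_continuousOn (by fun_prop)
  have hsin : IntervalIntegrable (fun x ↦ f x * (sin (ω * (x - a)) : ℝ)) volume a b :=
    hf.mul_continuousOn (by fun_prop)
  rw [cosIntegral, sinIntegral, ← intervalIntegral.integral_mul_const,
    ← intervalIntegral.integral_sub hcos (hsin.mul_const _)]
  congr 1 with x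
  rw [Complex.exp_mul_I, Complex.cos_neg, Complex.sin_neg, Complex.ofReal_cos, Complex.ofReal_sin]
  ring

lemma mul_fourierCoeffOn_eq_exp_mul (hab : a < b) (hf : IntervalIntegrable f volume a b) (n : ℤ) :
    (b - a : ℝ) * fourierCoeffOn hab f n =
      Complex.exp ((-(angularFreq a b n * a) : ℝ) * Complex.I) *
        (cosIntegral a b f (angularFreq a b n) -
          sinIntegral a b f (angularFreq a b n) * Complex.I) := by
  rw [cosIntegral_sub_sinIntegral_mul_I hf, ← intervalIntegral.integral_const_mul,
    fourierCoeffOn_eq_integral, Complex.real_smul, ← mul_assoc, ← Complex.ofReal_mul,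
    mul_one_div_cancel (sub_pos.2 hab).ne', Complex.ofReal_one, one_mul]
  congr 1 with x
  rw [mul_left_comm, ← Complex.exp_add, smul_eq_mul, mul_comm, fourier_coe_apply]
  congr 2
  simp only [angularFreq]
  push_cast
  field_simp
  ring

lemma sq_mul_norm_sq_fourierCoeffOn (hab : a < b) (hf : IntervalIntegrable f volume a b) (n : ℤ) :
    (b - a) ^ 2 * ‖fourierCoeffOn hab f n‖ ^ 2 =
      ‖cosIntegral a b f (angularFreq a b n) -
        sinIntegral a b f (angularFreq a b n) * Complex.I‖ ^ 2 := by
  have h := congrArg (‖·‖ ^ 2) (mul_fourierCoeffOn_eq_exp_mul hab hf n)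
  simpa only [Pi.pow_apply, norm_mul, Complex.norm_exp_ofReal_mul_I, one_mul, mul_pow,
    Complex.norm_real, norm_eq_abs, sq_abs] using h

lemma sq_mul_norm_sq_fourierCoeffOn_add_neg (hab : a < b) (hf : IntervalIntegrable f volume a b)
    (n : ℤ) :
    (b - a) ^ 2 * (‖fourierCoeffOn hab f n‖ ^ 2 + ‖fourierCoeffOn hab f (-n)‖ ^ 2) =
      2 * (‖cosIntegral a b f (angularFreq a b n)‖ ^ 2 +
        ‖sinIntegral a b f (angularFreq a b n)‖ ^ 2) := by
  have hparallelogram := parallelogram_law_with_norm ℝ (cosIntegral a b f (angularFreq a b n))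
    (sinIntegral a b f (angularFreq a b n) * Complex.I)
  rw [norm_mul, Complex.norm_I, mul_one] at hparallelogram
  rw [mul_add, sq_mul_norm_sq_fourierCoeffOn hab hf, sq_mul_norm_sq_fourierCoeffOn hab hf,
    angularFreq_neg, cosIntegral_neg, sinIntegral_neg, neg_mul, sub_neg_eq_add]
  linear_combination hparallelogram

lemma trigCoeff_one : trigCoeff a b f 1 = (1 / √(b - a) : ℝ) * cosIntegral a b f 0 := by
  simp only [trigCoeff, cosIntegral, phiB, if_true, zero_mul, cos_zero, Complex.ofReal_one, mul_one,
    intervalIntegral.integral_mul_const]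
  ring

lemma trigCoeff_two_mul (m : ℕ) :
    trigCoeff a b f (2 * m) = (√(2 / (b - a)) : ℝ) * cosIntegral a b f (angularFreq a b m) := by
  rw [trigCoeff, cosIntegral, ← intervalIntegral.integral_const_mul]
  congr 1 with x
  rw [phiB, if_neg (by omega), if_pos (even_two_mul m), Nat.mul_div_cancel_left m two_pos,
    angularFreq, Int.cast_natCast, div_mul_eq_mul_div, Complex.ofReal_mul]
  ring

lemma trigCoeff_two_mul_add_one {m : ℕ} (hm : m ≠ 0) :
    trigCoeff a b f (2 * m + 1) =
      (√(2 / (b - a)) : ℝ) * sinIntegral a b f (angularFreq a b m) := by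
  rw [trigCoeff, sinIntegral, ← intervalIntegral.integral_const_mul]
  congr 1 with x
  rw [phiB, if_neg (by omega), if_neg (Nat.not_even_two_mul_add_one m),
    show (2 * m + 1) / 2 = m by omega, angularFreq, Int.cast_natCast, div_mul_eq_mul_div,
    Complex.ofReal_mul]
  ring

lemma norm_sq_trigCoeff_one (hab : a < b) (hf : IntervalIntegrable f volume a b) :
    ‖trigCoeff a b f 1‖ ^ 2 = (b - a) * ‖fourierCoeffOn hab f 0‖ ^ 2 := by
  have hlen : 0 < b - a := sub_pos.2 hab
  have hzero : (b - a) ^ 2 * ‖fourierCoeffOn hab f 0‖ ^ 2 = ‖cosIntegral a b f 0‖ ^ 2 := by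
    simpa [angularFreq, sinIntegral] using sq_mul_norm_sq_fourierCoeffOn hab hf 0
  rw [trigCoeff_one, norm_mul, mul_pow, ← hzero, Complex.norm_real, norm_eq_abs, sq_abs, div_pow,
    sq_sqrt hlen.le]
  field_simp

lemma norm_sq_trigCoeff_two_mul_add (hab : a < b) (hf : IntervalIntegrable f volume a b) {m : ℕ}
    (hm : m ≠ 0) :
    ‖trigCoeff a b f (2 * m)‖ ^ 2 + ‖trigCoeff a b f (2 * m + 1)‖ ^ 2 =
      (b - a) * (‖fourierCoeffOn hab f m‖ ^ 2 + ‖fourierCoeffOn hab f (-m)‖ ^ 2) := by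
  have hlen : 0 < b - a := sub_pos.2 hab
  have hpair := sq_mul_norm_sq_fourierCoeffOn_add_neg hab hf m
  rw [trigCoeff_two_mul, trigCoeff_two_mul_add_one hm, norm_mul, norm_mul, mul_pow, mul_pow,
    Complex.norm_real, norm_eq_abs, sq_abs, sq_sqrt (by positivity), ← mul_add,
    div_mul_eq_mul_div, ← hpair]
  field_simp

end Trigonometric

section OfReal

variable {a b : ℝ} {f : ℝ → ℝ}

lemma trigCoeff_ofReal (j : ℕ) :
    trigCoeff a b (fun x ↦ f x) j = (∫ x in a..b, f x * phiB a b j x : ℝ) := by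
  simp only [trigCoeff, ← Complex.ofReal_mul, intervalIntegral.integral_ofReal]

lemma iteratedDerivWithin_Icc_ofReal (hab : a < b) {k : ℕ} (hf : ContDiffOn ℝ k f (Icc a b))
    {i : ℕ} (hi : i ≤ k) {x : ℝ} (hx : x ∈ Icc a b) :
    iteratedDerivWithin i (fun y ↦ (f y : ℂ)) (Icc a b) x =
      (iteratedDerivWithin i f (Icc a b) x : ℝ) :=
  iteratedDerivWithin_continuousLinearMap_comp Complex.ofRealCLM hf (uniqueDiffOn_Icc hab) hx
    (by exact_mod_cast hi)

lemma sum_integral_norm_sq_iteratedDerivWithin_ofReal (hab : a < b) {k : ℕ}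
    (hf : ContDiffOn ℝ k f (Icc a b)) :
    ∑ i ∈ Finset.range (k + 1),
        ∫ x in a..b, ‖iteratedDerivWithin i (fun y ↦ (f y : ℂ)) (Icc a b) x‖ ^ 2 =
      ∑ i ∈ Finset.range (k + 1), ∫ x in a..b, iteratedDerivWithin i f (Icc a b) x ^ 2 := by
  refine Finset.sum_congr rfl fun i hi ↦ intervalIntegral.integral_congr fun x hx ↦ ?_
  rw [uIcc_of_le hab.le] at hx
  simp only [iteratedDerivWithin_Icc_ofReal hab hf (Finset.mem_range_succ_iff.1 hi) hx,
    Complex.norm_real, norm_eq_abs, sq_abs]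

end OfReal

theorem stmt3_general {a b : ℝ} (hab : a < b) {k : ℕ} {f : ℝ → ℂ} (hf : ContDiffOn ℝ k f (Icc a b))
    (hper : ∀ i < k, iteratedDerivWithin i f (Icc a b) a = iteratedDerivWithin i f (Icc a b) b) :
    HasSum (fun j : ℕ ↦ varpi a b k (j + 1) * ‖trigCoeff a b f (j + 1)‖ ^ 2)
      (∑ i ∈ Finset.range (k + 1), ∫ x in a..b, ‖iteratedDerivWithin i f (Icc a b) x‖ ^ 2) := by
  have hint : IntervalIntegrable f volume a b := hf.continuousOn.intervalIntegrable_of_Icc hab.le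
  refine hasSum_nat_of_hasSum_int_pairs
    (hasSum_sobolevWeight_mul_norm_sq_fourierCoeffOn hab hf hper) ?_ ?_ fun m ↦ ?_
  · intro j
    rw [varpi_eq_sobolevWeight]
    exact mul_nonneg (sobolevWeight_nonneg k _) (sq_nonneg _)
  · rw [varpi_eq_sobolevWeight, norm_sq_trigCoeff_one hab hint]
    rfl
  · have hpair := norm_sq_trigCoeff_two_mul_add hab hint m.succ_ne_zero
    rw [varpi_eq_sobolevWeight, varpi_eq_sobolevWeight, angularFreq_neg, sobolevWeight_neg,
      show (2 * m + 1 + 1) / 2 = m + 1 by omega, show (2 * m + 2 + 1) / 2 = m + 1 by omega,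
      ← mul_add, ← mul_add, ← mul_add, ← hpair]
    rfl

/-- Parseval-type identity
`Σ_{i=0}^k ∫_a^b (f^{(i)})² = Σ_{j≥1} ϖ_j θ_j²` for `f` k-times continuously
differentiable on `[a,b]` with periodic boundary values of all derivatives up to
order `k`. -/
theorem stmt3 (a b : ℝ) (hab : a < b) (hba : 1 ≤ b - a) (k : ℕ) (hk : 1 ≤ k)
    (f : ℝ → ℝ) (hf : ContDiffOn ℝ k f (Set.Icc a b))
    (hper : ∀ i ≤ k,
      iteratedDerivWithin i f (Set.Icc a b) a = iteratedDerivWithin i f (Set.Icc a b) b) :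
    HasSum
      (fun j : ℕ =>
        varpi a b k (j + 1) * (∫ x in a..b, f x * phiB a b (j + 1) x) ^ 2)
      (∑ i ∈ Finset.range (k + 1),
        ∫ x in a..b, (iteratedDerivWithin i f (Set.Icc a b) x) ^ 2) := by
  have hsum := stmt3_general hab (f := fun x ↦ (f x : ℂ))
    (Complex.ofRealCLM.contDiff.comp_contDiffOn hf) fun i hi ↦ by
      simp only [iteratedDerivWithin_Icc_ofReal hab hf hi.le, left_mem_Icc.2 hab.le,
        right_mem_Icc.2 hab.le, hper i hi.le]
  simpa only [sum_integral_norm_sq_iteratedDerivWithin_ofReal hab hf, trigCoeff_ofReal,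
    Complex.norm_real, norm_eq_abs, sq_abs] using hsum
end

section
/- Let L ≥ 1, a < b with b − a ≥ 1, k ≥ 1 an integer and r > 0. Define γ(S) = ((1+2k)r)^{1/(2k+1)} · (J(S)·k/(π(k+1)))^{2k/(2k+1)}. Then 0 < inf_{S ∈ Σ_L} γ(S) ≤ sup_{S ∈ Σ_L} γ(S) < ∞. -/
open MeasureTheory Real Set Filter

noncomputable section

/-- The Pinsker-constant normalizing coefficient `γ(S)`. -/
def gammaS (a b : ℝ) (k : ℕ) (r : ℝ) (S : ℝ → ℝ) : ℝ :=
  ((1 + 2 * (k : ℝ)) * r) ^ ((1 : ℝ) / (2 * k + 1)) *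
    (Jfun a b S * k / (Real.pi * (k + 1))) ^ ((2 * (k : ℝ)) / (2 * k + 1))

end

/-!
Only `J(S)` depends on `S` in `γ(S)`, and `γ(S)` is an increasing function of it. By the
Cauchy–Schwarz inequality `(b - a)² ≤ (∫_a^b q_S) · J(S) ≤ J(S)`, so `J` is bounded below as soon as
`q_S` is a genuine probability density. From above, a drift satisfying `z S(z) ≤ C|z| - c z²` has
`2 ∫_0^y S ≤ 2C|y| - c y²`, which bounds the normalizing constant by a Gaussian integral, while a
bound on `S` over a compact interval containing `0`, `a` and `b` keeps `exp(-2 ∫_0^u S)` bounded on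
`[a, b]`. Functions in `Σ_L` have both properties, with constants depending only on `L`.
-/

theorem sq_sub_le_integral_mul_integral_one_div {f : ℝ → ℝ} {a b : ℝ} (hab : a ≤ b)
    (hf : ContinuousOn f (Icc a b)) (hpos : ∀ x ∈ Icc a b, 0 < f x) :
    (b - a) ^ 2 ≤ (∫ x in a..b, f x) * ∫ x in a..b, 1 / f x := by
  have hfi : IntervalIntegrable f volume a b := hf.intervalIntegrable_of_Icc hab
  have hfi' : IntervalIntegrable (fun x ↦ 1 / f x) volume a b :=
    (continuousOn_const.div hf fun x hx ↦ (hpos x hx).ne').intervalIntegrable_of_Icc hab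
  have expand (t : ℝ) : ∫ x in a..b, (t ^ 2 * f x - 2 * t + 1 / f x) =
      t ^ 2 * (∫ x in a..b, f x) - 2 * t * (b - a) + ∫ x in a..b, 1 / f x := by
    rw [intervalIntegral.integral_add ((hfi.const_mul _).sub intervalIntegrable_const) hfi',
      intervalIntegral.integral_sub (hfi.const_mul _) intervalIntegrable_const,
      intervalIntegral.integral_const_mul, intervalIntegral.integral_const, smul_eq_mul,
      mul_comm (b - a)]
  have integrand_nonneg (t x : ℝ) (hx : x ∈ Icc a b) : 0 ≤ t ^ 2 * f x - 2 * t + 1 / f x := by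
    have hfx := hpos x hx
    have : t ^ 2 * f x - 2 * t + 1 / f x = (t * f x - 1) ^ 2 / f x := by field_simp; ring
    rw [this]
    positivity
  have hdiscrim := discrim_le_zero (a := ∫ x in a..b, f x) (b := -(2 * (b - a)))
    (c := ∫ x in a..b, 1 / f x) fun t ↦ by
      have hnonneg := intervalIntegral.integral_nonneg (μ := volume) hab (integrand_nonneg t)
      linarith [expand t]
  rw [discrim] at hdiscrim
  linarith

section ErgodicDensity

/-- The ergodic density of the drift `S` before normalization, so that
`q_S = speedDensity S / qdenom S`. Up to a constant factor it is the density of the speed measure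
of the diffusion `dX = S(X) dt + dW`. -/
noncomputable def speedDensity (S : ℝ → ℝ) (y : ℝ) : ℝ :=
  exp (2 * ∫ z in (0 : ℝ)..y, S z)

variable {S : ℝ → ℝ} {a b : ℝ}

theorem speedDensity_pos (S : ℝ → ℝ) (y : ℝ) : 0 < speedDensity S y :=
  exp_pos _

theorem continuous_speedDensity (hS : Continuous S) : Continuous (speedDensity S) :=
  ((intervalIntegral.continuous_primitive hS.intervalIntegrable 0).const_mul 2).rexp

theorem qdenom_pos (hint : Integrable (speedDensity S)) : 0 < qdenom S :=
  integral_exp_pos hint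

theorem integral_qdens_le_one (hab : a ≤ b) (hint : Integrable (speedDensity S)) :
    ∫ x in a..b, qdens S x ≤ 1 := by
  have hle : ∫ x in a..b, speedDensity S x ≤ qdenom S := by
    rw [intervalIntegral.integral_of_le hab]
    exact setIntegral_le_integral hint (Eventually.of_forall fun y ↦ (speedDensity_pos S y).le)
  calc ∫ x in a..b, qdens S x = (∫ x in a..b, speedDensity S x) / qdenom S :=
        intervalIntegral.integral_div _ _
    _ ≤ 1 := div_le_one_of_le₀ hle (qdenom_pos hint).le

theorem sq_sub_le_Jfun (hab : a ≤ b) (hS : Continuous S) (hint : Integrable (speedDensity S)) :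
    (b - a) ^ 2 ≤ Jfun a b S := by
  have hq_pos (x : ℝ) : 0 < qdens S x := div_pos (speedDensity_pos S x) (qdenom_pos hint)
  have hq_cont : Continuous (qdens S) := (continuous_speedDensity hS).div_const _
  have hJ_nonneg : 0 ≤ Jfun a b S :=
    intervalIntegral.integral_nonneg hab fun x _ ↦ (one_div_pos.2 (hq_pos x)).le
  calc (b - a) ^ 2 ≤ (∫ x in a..b, qdens S x) * Jfun a b S :=
        sq_sub_le_integral_mul_integral_one_div hab hq_cont.continuousOn fun x _ ↦ hq_pos x
    _ ≤ Jfun a b S := mul_le_of_le_one_left hJ_nonneg (integral_qdens_le_one hab hint)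

theorem Jfun_eq_qdenom_mul_integral (a b : ℝ) (S : ℝ → ℝ) :
    Jfun a b S = qdenom S * ∫ u in a..b, (speedDensity S u)⁻¹ := by
  rw [Jfun, ← intervalIntegral.integral_const_mul]
  simp only [qdens, speedDensity, one_div_div, ← div_eq_mul_inv]

theorem Jfun_le_of_abs_integral_le {A : ℝ} (hab : a ≤ b) (hS : Continuous S)
    (hA : ∀ u ∈ Icc a b, |∫ z in (0 : ℝ)..u, S z| ≤ A) :
    Jfun a b S ≤ qdenom S * ((b - a) * exp (2 * A)) := by
  have hinv (u : ℝ) (hu : u ∈ Icc a b) : (speedDensity S u)⁻¹ ≤ exp (2 * A) := by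
    rw [speedDensity, ← exp_neg]
    exact exp_le_exp.2 (by linarith [(abs_le.1 (hA u hu)).1])
  have hcont : Continuous fun u ↦ (speedDensity S u)⁻¹ :=
    (continuous_speedDensity hS).inv₀ fun u ↦ (speedDensity_pos S u).ne'
  have hintegral : ∫ u in a..b, (speedDensity S u)⁻¹ ≤ (b - a) * exp (2 * A) :=
    calc ∫ u in a..b, (speedDensity S u)⁻¹ ≤ ∫ _ in a..b, exp (2 * A) :=
          intervalIntegral.integral_mono_on hab (hcont.intervalIntegrable _ _)
            intervalIntegrable_const hinv
      _ = (b - a) * exp (2 * A) := by rw [intervalIntegral.integral_const, smul_eq_mul]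
  rw [Jfun_eq_qdenom_mul_integral]
  exact mul_le_mul_of_nonneg_left hintegral (integral_nonneg fun _ ↦ (exp_pos _).le)

end ErgodicDensity

/-- A continuous drift `S` that pulls back towards the origin, `z S(z) ≤ C|z| - c z²`, and is
bounded by `B R` on each `[-R, R]`. The data `B`, `C`, `c` are kept as parameters so that they can
be shared by a whole family of drifts; the pull is effective when `0 < c`. -/
structure IsDissipativeDrift (B : ℝ → ℝ) (C c : ℝ) (S : ℝ → ℝ) : Prop where
  continuous : Continuous S
  abs_le : ∀ R z : ℝ, |z| ≤ R → |S z| ≤ B R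
  mul_apply_le : ∀ z : ℝ, z * S z ≤ C * |z| - c * z ^ 2

namespace IsDissipativeDrift

variable {B : ℝ → ℝ} {C c : ℝ} {S : ℝ → ℝ}

theorem abs_integral_le (hS : IsDissipativeDrift B C c S) {R y : ℝ} (hy : |y| ≤ R) :
    |∫ z in (0 : ℝ)..y, S z| ≤ B R * R := by
  have hbound : ∀ z ∈ uIoc 0 y, ‖S z‖ ≤ B R := fun z hz ↦ by
    have hzy : |z| ≤ |y| := by
      simpa only [sub_zero] using abs_sub_left_of_mem_uIcc (uIoc_subset_uIcc hz)
    exact hS.abs_le R z (hzy.trans hy)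
  have hB : 0 ≤ B R := (abs_nonneg (S y)).trans (hS.abs_le R y hy)
  calc |∫ z in (0 : ℝ)..y, S z| ≤ B R * |y - 0| :=
        intervalIntegral.norm_integral_le_of_norm_le_const hbound
    _ ≤ B R * R := by rw [sub_zero]; exact mul_le_mul_of_nonneg_left hy hB

theorem integral_le (hS : IsDissipativeDrift B C c S) (y : ℝ) :
    ∫ z in (0 : ℝ)..y, S z ≤ C * |y| - c * y ^ 2 / 2 := by
  have hray (t : ℝ) (ht : t ∈ Ioo (0 : ℝ) 1) : y * S (y * t) ≤ C * |y| - c * y ^ 2 * t := by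
    have h := hS.mul_apply_le (y * t)
    rw [abs_mul, abs_of_pos ht.1] at h
    exact le_of_mul_le_mul_left (by linarith) ht.1
  have hScont := hS.continuous
  calc ∫ z in (0 : ℝ)..y, S z = ∫ t in (0 : ℝ)..1, y * S (y * t) := by
        rw [intervalIntegral.integral_const_mul, intervalIntegral.mul_integral_comp_mul_left,
          mul_zero, mul_one]
    _ ≤ ∫ t in (0 : ℝ)..1, (C * |y| - c * y ^ 2 * t) :=
        intervalIntegral.integral_mono_on_of_le_Ioo zero_le_one
          (Continuous.intervalIntegrable (by fun_prop) _ _)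
          (Continuous.intervalIntegrable (by fun_prop) _ _) hray
    _ = C * |y| - c * y ^ 2 / 2 := by
        rw [intervalIntegral.integral_sub intervalIntegrable_const
            (Continuous.intervalIntegrable (by fun_prop) _ _),
          intervalIntegral.integral_const, intervalIntegral.integral_const_mul, integral_id,
          smul_eq_mul]
        ring

theorem speedDensity_le (hS : IsDissipativeDrift B C c S) (hc : 0 < c) (y : ℝ) :
    speedDensity S y ≤ exp (2 * C ^ 2 / c) * exp (-(c / 2) * y ^ 2) := by
  have hsquare : 2 * C ^ 2 / c + -(c / 2) * y ^ 2 - 2 * (C * |y| - c * y ^ 2 / 2) =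
      (c * |y| - 2 * C) ^ 2 / (2 * c) := by
    rw [← sq_abs y]
    field_simp
    ring
  have hsquare_nonneg : 0 ≤ (c * |y| - 2 * C) ^ 2 / (2 * c) := by positivity
  rw [← exp_add]
  exact exp_le_exp.2 (by linarith [hS.integral_le y])

theorem integrable_speedDensity (hS : IsDissipativeDrift B C c S) (hc : 0 < c) :
    Integrable (speedDensity S) := by
  refine ((integrable_exp_neg_mul_sq (half_pos hc)).const_mul (exp (2 * C ^ 2 / c))).mono'
    (continuous_speedDensity hS.continuous).aestronglyMeasurable (Eventually.of_forall fun y ↦ ?_)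
  rw [norm_of_nonneg (speedDensity_pos S y).le]
  exact hS.speedDensity_le hc y

theorem qdenom_le (hS : IsDissipativeDrift B C c S) (hc : 0 < c) :
    qdenom S ≤ exp (2 * C ^ 2 / c) * √(π / (c / 2)) :=
  calc qdenom S ≤ ∫ y : ℝ, exp (2 * C ^ 2 / c) * exp (-(c / 2) * y ^ 2) :=
        integral_mono (hS.integrable_speedDensity hc)
          ((integrable_exp_neg_mul_sq (half_pos hc)).const_mul _) (hS.speedDensity_le hc)
    _ = exp (2 * C ^ 2 / c) * √(π / (c / 2)) := by rw [integral_const_mul, integral_gaussian]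

theorem Jfun_le (hS : IsDissipativeDrift B C c S) (hc : 0 < c) {a b R : ℝ} (hab : a ≤ b)
    (hR : ∀ u ∈ Icc a b, |u| ≤ R) :
    Jfun a b S ≤
      exp (2 * C ^ 2 / c) * √(π / (c / 2)) * ((b - a) * exp (2 * (B R * R))) :=
  (Jfun_le_of_abs_integral_le hab hS.continuous fun u hu ↦ hS.abs_integral_le (hR u hu)).trans <|
    mul_le_mul_of_nonneg_right (hS.qdenom_le hc) <|
      mul_nonneg (sub_nonneg.2 hab) (exp_pos _).le

end IsDissipativeDrift

namespace SigmaL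

variable {L : ℝ} {S : ℝ → ℝ}

theorem abs_le_mul_one_add (hS : SigmaL L S) (hL : 0 ≤ L) {R z : ℝ} (hz : |z| ≤ R) :
    |S z| ≤ L * (1 + R) := by
  have hzero : |S 0| ≤ L := hS.2.1 0 (abs_zero.trans_le hL)
  have hlip : |S z - S 0| ≤ L * |z| := by simpa only [sub_zero] using hS.1.2 z 0
  calc |S z| ≤ |S z - S 0| + |S 0| := by linarith [abs_sub_abs_le_abs_sub (S z) (S 0)]
    _ ≤ L * |z| + L := add_le_add hlip hzero
    _ ≤ L * (1 + R) := by linarith [mul_le_mul_of_nonneg_left hz hL]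

theorem sub_le_of_forall_le_abs (hS : SigmaL L S) {x y : ℝ} (hxy : x ≤ y)
    (hout : ∀ t ∈ Icc x y, L ≤ |t|) : S y - S x ≤ -(1 / L) * (y - x) := by
  obtain ⟨⟨hcont, -⟩, -, S', -, hS'⟩ := hS
  have hderiv (t : ℝ) (ht : t ∈ interior (Icc x y)) := hS' t (hout t (interior_subset ht))
  exact (convex_Icc x y).image_sub_le_mul_sub_of_deriv_le hcont.continuousOn
    (fun t ht ↦ (hderiv t ht).1.differentiableAt.differentiableWithinAt)
    (fun t ht ↦ (hderiv t ht).1.deriv.trans_le (hderiv t ht).2.2)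
    x (left_mem_Icc.2 hxy) y (right_mem_Icc.2 hxy) hxy

theorem mul_apply_le (hS : SigmaL L S) (hL : 0 < L) (z : ℝ) :
    z * S z ≤ (L + 1) * |z| - 1 / L * z ^ 2 := by
  have hfactor : (L + 1) * |z| - 1 / L * z ^ 2 = |z| * (L + 1 - |z| / L) := by
    rw [← sq_abs]; ring
  have hLL : L / L = 1 := div_self hL.ne'
  rw [hfactor]
  rcases le_total |z| L with hz | hz
  · have hSz : |S z| ≤ L + 1 - |z| / L := by linarith [hS.2.1 z hz, div_le_one_of_le₀ hz hL.le]
    calc z * S z ≤ |z| * |S z| := (le_abs_self _).trans_eq (abs_mul _ _)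
      _ ≤ |z| * (L + 1 - |z| / L) := mul_le_mul_of_nonneg_left hSz (abs_nonneg z)
  · rcases le_abs'.1 hz with hneg | hpos
    · have hslope := hS.sub_le_of_forall_le_abs hneg fun t ht ↦ le_abs'.2 (.inl ht.2)
      have hend := (abs_le.1 (hS.2.1 (-L) (by rw [abs_neg, abs_of_pos hL]))).1
      have hz0 : z ≤ 0 := by linarith
      have hSz : -S z ≤ L + 1 - -z / L := by
        have : -(1 / L) * (-L - z) = L / L - -z / L := by ring
        linarith
      rw [abs_of_nonpos hz0, ← neg_mul_neg]
      exact mul_le_mul_of_nonneg_left hSz (neg_nonneg.2 hz0)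
    · have hslope := hS.sub_le_of_forall_le_abs hpos fun t ht ↦ le_abs'.2 (.inr ht.1)
      have hend := (abs_le.1 (hS.2.1 L (abs_of_pos hL).le)).2
      have hz0 : 0 ≤ z := by linarith
      have hSz : S z ≤ L + 1 - z / L := by
        have : -(1 / L) * (z - L) = L / L - z / L := by ring
        linarith
      rw [abs_of_nonneg hz0]
      exact mul_le_mul_of_nonneg_left hSz hz0

theorem isDissipativeDrift (hS : SigmaL L S) (hL : 0 < L) :
    IsDissipativeDrift (fun R ↦ L * (1 + R)) (L + 1) (1 / L) S where
  continuous := hS.1.1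
  abs_le _ _ hz := hS.abs_le_mul_one_add hL.le hz
  mul_apply_le := hS.mul_apply_le hL

end SigmaL

section PinskerCoefficient

/-- The coefficient `γ` as a function of the value `J` of the functional `J(S)`; by definition
`gammaS a b k r S = pinskerCoeff k r (Jfun a b S)`. -/
noncomputable def pinskerCoeff (k : ℕ) (r J : ℝ) : ℝ :=
  ((1 + 2 * (k : ℝ)) * r) ^ ((1 : ℝ) / (2 * k + 1)) *
    (J * k / (π * (k + 1))) ^ ((2 * (k : ℝ)) / (2 * k + 1))

variable {k : ℕ} {r : ℝ}

theorem pinskerCoeff_pos (hk : 1 ≤ k) (hr : 0 < r) {J : ℝ} (hJ : 0 < J) :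
    0 < pinskerCoeff k r J := by
  have : (0 : ℝ) < k := Nat.cast_pos.2 hk
  unfold pinskerCoeff
  positivity

theorem monotoneOn_pinskerCoeff (k : ℕ) (hr : 0 ≤ r) :
    MonotoneOn (pinskerCoeff k r) (Ici 0) := by
  intro J (hJ : 0 ≤ J) J' _ hJJ'
  unfold pinskerCoeff
  gcongr

end PinskerCoefficient

theorem stmt5_general {B : ℝ → ℝ} {C c a b : ℝ} (hc : 0 < c) (hab : a < b)
    {k : ℕ} (hk : 1 ≤ k) {r : ℝ} (hr : 0 < r) :
    ∃ m M : ℝ, 0 < m ∧ m ≤ M ∧ ∀ S : ℝ → ℝ, IsDissipativeDrift B C c S →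
      m ≤ gammaS a b k r S ∧ gammaS a b k r S ≤ M := by
  set R := max |a| |b|
  set lower := (b - a) ^ 2
  set upper := exp (2 * C ^ 2 / c) * √(π / (c / 2)) * ((b - a) * exp (2 * (B R * R)))
  have hlower : 0 < lower := pow_pos (sub_pos.2 hab) 2
  have hmono {x y : ℝ} (hx : lower ≤ x) (hxy : x ≤ y) : pinskerCoeff k r x ≤ pinskerCoeff k r y :=
    have hx0 : 0 ≤ x := hlower.le.trans hx
    monotoneOn_pinskerCoeff k hr.le hx0 (hx0.trans hxy) hxy
  refine ⟨pinskerCoeff k r lower, pinskerCoeff k r (max lower upper),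
    pinskerCoeff_pos hk hr hlower, hmono le_rfl (le_max_left _ _), fun S hS ↦ ?_⟩
  have hJ_lower : lower ≤ Jfun a b S :=
    sq_sub_le_Jfun hab.le hS.continuous (hS.integrable_speedDensity hc)
  have hJ_upper : Jfun a b S ≤ upper :=
    hS.Jfun_le hc hab.le fun u hu ↦ abs_le_max_abs_abs hu.1 hu.2
  exact ⟨hmono le_rfl hJ_lower, hmono hJ_lower (hJ_upper.trans (le_max_right _ _))⟩

/-- `0 < inf_{S ∈ Σ_L} γ(S) ≤ sup_{S ∈ Σ_L} γ(S) < ∞`. -/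
theorem stmt5 (L a b : ℝ) (hL : 1 ≤ L) (hab : a < b) (hba : 1 ≤ b - a)
    (k : ℕ) (hk : 1 ≤ k) (r : ℝ) (hr : 0 < r) :
    ∃ m M : ℝ, 0 < m ∧ m ≤ M ∧
      ∀ S : ℝ → ℝ, SigmaL L S → m ≤ gammaS a b k r S ∧ gammaS a b k r S ≤ M := by
  have hL0 : 0 < L := zero_lt_one.trans_le hL
  obtain ⟨m, M, hm, hmM, hγ⟩ := stmt5_general (one_div_pos.2 hL0) hab hk hr
  exact ⟨m, M, hm, hmM, fun S hS ↦ hγ S (hS.isDissipativeDrift hL0)⟩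
end

section
/- Let a < b be reals and let n ≥ 1 be an odd integer. Set x_l = a + l(b−a)/n for 1 ≤ l ≤ n. Then the trigonometric basis functions satisfy the discrete orthonormality relations ((b−a)/n) Σ_{l=1}^n φ_i(x_l) φ_j(x_l) = δ_{ij} for all 1 ≤ i, j ≤ n. -/
open Real

/-!
At the design points the basis functions are, up to the factor `1 / √(b - a)`, sines and cosines of
integer frequency evaluated at the angles `2πl/n`. Product-to-sum formulas reduce the claim to the
sums `∑ exp(2πiml/n)`, which vanish unless `n ∣ m`. The frequencies involved are
`m = ⌊i/2⌋ ± ⌊j/2⌋`; for odd `n` and `i, j ≤ n` they satisfy `|m| ≤ n - 1`, so that `n ∣ m` happens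
only for `m = 0` (no aliasing).
-/

section ExponentialSums

lemma sum_Icc_pow_eq_zero_of_pow_eq_one {K : Type*} [DivisionRing K] {z : K} {n : ℕ}
    (hz : z ≠ 1) (hzn : z ^ n = 1) : ∑ l ∈ Finset.Icc 1 n, z ^ l = 0 := by
  rw [← Finset.Ico_add_one_right_eq_Icc, geom_sum_Ico hz (Nat.le_add_left 1 n), pow_succ, hzn,
    one_mul, pow_one, sub_self, zero_div]

variable (n : ℕ)

lemma sum_exp_mul_two_pi_div (m : ℤ) :
    ∑ l ∈ Finset.Icc 1 n, Complex.exp ((m * (2 * π * l / n) : ℝ) * Complex.I) =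
      if (n : ℤ) ∣ m then (n : ℂ) else 0 := by
  rcases eq_or_ne n 0 with rfl | hn
  · simp
  have hζ := Complex.isPrimitiveRoot_exp n hn
  set z : ℂ := Complex.exp (2 * π * Complex.I / n) ^ m with hz
  have hterm (l : ℕ) : Complex.exp ((m * (2 * π * l / n) : ℝ) * Complex.I) = z ^ l := by
    rw [hz, ← Complex.exp_int_mul, ← Complex.exp_nat_mul]
    congr 1
    push_cast
    ring
  have hz_one : z = 1 ↔ (n : ℤ) ∣ m := hζ.zpow_eq_one_iff_dvd m
  have hz_pow : z ^ n = 1 := by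
    rw [hz, ← zpow_natCast, zpow_comm, zpow_natCast, hζ.pow_eq_one, one_zpow]
  simp_rw [hterm]
  split_ifs with hm
  · simp [hz_one.mpr hm]
  · exact sum_Icc_pow_eq_zero_of_pow_eq_one (mt hz_one.mp hm) hz_pow

lemma sum_cos_mul_two_pi_div (m : ℤ) :
    ∑ l ∈ Finset.Icc 1 n, cos (m * (2 * π * l / n)) = if (n : ℤ) ∣ m then (n : ℝ) else 0 := by
  have h := congrArg Complex.re (sum_exp_mul_two_pi_div n m)
  simpa only [Complex.re_sum, Complex.exp_ofReal_mul_I_re, apply_ite Complex.re,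
    Complex.natCast_re, Complex.zero_re] using h

lemma sum_sin_mul_two_pi_div (m : ℤ) :
    ∑ l ∈ Finset.Icc 1 n, sin (m * (2 * π * l / n)) = 0 := by
  have h := congrArg Complex.im (sum_exp_mul_two_pi_div n m)
  simpa only [Complex.im_sum, Complex.exp_ofReal_mul_I_im, apply_ite Complex.im,
    Complex.natCast_im, Complex.zero_im, ite_self] using h

lemma sum_cos_mul_cos (p q : ℤ) :
    ∑ l ∈ Finset.Icc 1 n, cos (p * (2 * π * l / n)) * cos (q * (2 * π * l / n)) =
      ((if (n : ℤ) ∣ p - q then (n : ℝ) else 0) + if (n : ℤ) ∣ p + q then (n : ℝ) else 0) / 2 := by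
  rw [← sum_cos_mul_two_pi_div, ← sum_cos_mul_two_pi_div, ← Finset.sum_add_distrib,
    Finset.sum_div]
  refine Finset.sum_congr rfl fun l _ => ?_
  rw [Int.cast_sub, Int.cast_add, sub_mul, add_mul, cos_sub, cos_add]
  ring

lemma sum_sin_mul_sin (p q : ℤ) :
    ∑ l ∈ Finset.Icc 1 n, sin (p * (2 * π * l / n)) * sin (q * (2 * π * l / n)) =
      ((if (n : ℤ) ∣ p - q then (n : ℝ) else 0) - if (n : ℤ) ∣ p + q then (n : ℝ) else 0) / 2 := by
  rw [← sum_cos_mul_two_pi_div, ← sum_cos_mul_two_pi_div, ← Finset.sum_sub_distrib,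
    Finset.sum_div]
  refine Finset.sum_congr rfl fun l _ => ?_
  rw [Int.cast_sub, Int.cast_add, sub_mul, add_mul, cos_sub, cos_add]
  ring

lemma sum_sin_mul_cos (p q : ℤ) :
    ∑ l ∈ Finset.Icc 1 n, sin (p * (2 * π * l / n)) * cos (q * (2 * π * l / n)) = 0 := by
  have hprod (x y : ℝ) : sin x * cos y = (sin (x - y) + sin (x + y)) / 2 := by
    rw [sin_sub, sin_add]
    ring
  simp_rw [hprod, ← sub_mul, ← add_mul, ← Int.cast_sub, ← Int.cast_add]
  rw [← Finset.sum_div, Finset.sum_add_distrib, sum_sin_mul_two_pi_div, sum_sin_mul_two_pi_div,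
    add_zero, zero_div]

end ExponentialSums

section Modes

/-- The cosine of frequency `k`, normalised to have mean square `1` over a period; the constant mode
`k = 0` is therefore scaled differently from the others. -/
noncomputable def cosMode (k : ℕ) (θ : ℝ) : ℝ := (if k = 0 then 1 else √2) * cos (k * θ)

/-- The sine of frequency `k`, normalised to have mean square `1` over a period when `k ≠ 0`. -/
noncomputable def sinMode (k : ℕ) (θ : ℝ) : ℝ := √2 * sin (k * θ)

/-- The `j`-th element of the trigonometric basis as a function of the angle, in the order
`1, cos θ, sin θ, cos 2θ, sin 2θ, …` starting at `j = 1`, each normalised to mean square `1`. -/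
noncomputable def trigMode (j : ℕ) (θ : ℝ) : ℝ :=
  if j = 1 ∨ Even j then cosMode (j / 2) θ else sinMode (j / 2) θ

variable {n p q : ℕ}

lemma natCast_dvd_sub_iff_eq (h : p + q < n) : (n : ℤ) ∣ p - q ↔ p = q := by
  refine ⟨fun hdvd => ?_, fun hpq => by simp [hpq]⟩
  have habs : |(p : ℤ) - q| < n := by rw [abs_lt]; omega
  have hzero := Int.eq_zero_of_abs_lt_dvd hdvd habs
  omega

lemma natCast_dvd_add_iff_eq_zero (h : p + q < n) : (n : ℤ) ∣ p + q ↔ p = 0 ∧ q = 0 := by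
  rw [← Nat.cast_add, Int.natCast_dvd_natCast, ← Nat.add_eq_zero_iff]
  exact ⟨fun hdvd => Nat.eq_zero_of_dvd_of_lt hdvd h, fun hzero => hzero ▸ dvd_zero n⟩

lemma sum_cosMode_mul_cosMode (h : p + q < n) :
    ∑ l ∈ Finset.Icc 1 n, cosMode p (2 * π * l / n) * cosMode q (2 * π * l / n) =
      if p = q then (n : ℝ) else 0 := by
  have hsum := sum_cos_mul_cos n p q
  simp only [Int.cast_natCast, natCast_dvd_sub_iff_eq h, natCast_dvd_add_iff_eq_zero h] at hsum
  simp_rw [cosMode, mul_mul_mul_comm _ (cos _)]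
  rw [← Finset.mul_sum, hsum]
  rcases eq_or_ne p q with rfl | hpq
  · rcases eq_or_ne p 0 with rfl | hp
    · simp
    · simp only [hp, if_true, if_false, and_self, mul_self_sqrt zero_le_two]
      ring
  · have hne : ¬(p = 0 ∧ q = 0) := by omega
    simp [hpq, hne]

lemma sum_sinMode_mul_sinMode (hp : p ≠ 0) (h : p + q < n) :
    ∑ l ∈ Finset.Icc 1 n, sinMode p (2 * π * l / n) * sinMode q (2 * π * l / n) =
      if p = q then (n : ℝ) else 0 := by
  have hsum := sum_sin_mul_sin n p q
  simp only [Int.cast_natCast, natCast_dvd_sub_iff_eq h, natCast_dvd_add_iff_eq_zero h, hp,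
    false_and, if_false, sub_zero] at hsum
  simp_rw [sinMode, mul_mul_mul_comm _ (sin _)]
  rw [← Finset.mul_sum, hsum, mul_self_sqrt zero_le_two, mul_div_cancel₀ _ two_ne_zero]

lemma sum_sinMode_mul_cosMode (n p q : ℕ) :
    ∑ l ∈ Finset.Icc 1 n, sinMode p (2 * π * l / n) * cosMode q (2 * π * l / n) = 0 := by
  have hsum := sum_sin_mul_cos n p q
  simp only [Int.cast_natCast] at hsum
  simp_rw [sinMode, cosMode, mul_mul_mul_comm _ (sin _)]
  rw [← Finset.mul_sum, hsum, mul_zero]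

lemma sum_trigMode_mul_trigMode {i j : ℕ} (hi : 1 ≤ i) (hj : 1 ≤ j) (h : i / 2 + j / 2 < n) :
    ∑ l ∈ Finset.Icc 1 n, trigMode i (2 * π * l / n) * trigMode j (2 * π * l / n) =
      if i = j then (n : ℝ) else 0 := by
  by_cases hci : i = 1 ∨ Even i <;> by_cases hcj : j = 1 ∨ Even j <;>
    simp only [trigMode, hci, hcj, if_true, if_false]
  · have hij : i / 2 = j / 2 ↔ i = j := by grind
    simp only [sum_cosMode_mul_cosMode h, hij]
  · have hij : i ≠ j := by rintro rfl; exact hcj hci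
    simp_rw [mul_comm (cosMode _ _), sum_sinMode_mul_cosMode, if_neg hij]
  · have hij : i ≠ j := by rintro rfl; exact hci hcj
    rw [sum_sinMode_mul_cosMode, if_neg hij]
  · have hpos : i / 2 ≠ 0 := by grind
    have hij : i / 2 = j / 2 ↔ i = j := by grind
    simp only [sum_sinMode_mul_sinMode hpos h, hij]

end Modes

section Basis

variable {j : ℕ}

lemma phiB_eq_trigMode_div_sqrt (a b : ℝ) (hj : 1 ≤ j) (x : ℝ) :
    phiB a b j x = trigMode j (2 * π * ((x - a) / (b - a))) / √(b - a) := by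
  have harg : 2 * π * ((j / 2 : ℕ) : ℝ) * (x - a) / (b - a) =
      (j / 2 : ℕ) * (2 * π * ((x - a) / (b - a))) := by ring
  rw [phiB, harg, sqrt_div zero_le_two, trigMode, cosMode, sinMode]
  rcases eq_or_ne j 1 with rfl | hj_one
  · simp
  · have hfreq : j / 2 ≠ 0 := by omega
    simp only [hj_one, hfreq, if_false, false_or]
    split_ifs <;> ring

lemma phiB_add_mul_div {a b : ℝ} (hab : a < b) (hj : 1 ≤ j) (n l : ℕ) :
    phiB a b j (a + l * (b - a) / n) = trigMode j (2 * π * l / n) / √(b - a) := by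
  have hba : b - a ≠ 0 := (sub_pos.mpr hab).ne'
  have hangle : 2 * π * ((a + l * (b - a) / n - a) / (b - a)) = 2 * π * l / n := by
    rw [add_sub_cancel_left, div_right_comm, mul_div_cancel_right₀ _ hba, mul_div_assoc]
  rw [phiB_eq_trigMode_div_sqrt a b hj, hangle]

end Basis

theorem stmt11_general {a b : ℝ} (hab : a < b) {n i j : ℕ} (hi : 1 ≤ i) (hj : 1 ≤ j)
    (hij : i / 2 + j / 2 < n) :
    (b - a) / n *
        ∑ l ∈ Finset.Icc 1 n,
          phiB a b i (a + l * (b - a) / n) * phiB a b j (a + l * (b - a) / n)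
      = if i = j then 1 else 0 := by
  have hba : 0 < b - a := sub_pos.mpr hab
  have hn : (n : ℝ) ≠ 0 := Nat.cast_ne_zero.mpr (Nat.ne_zero_of_lt hij)
  simp_rw [phiB_add_mul_div hab hi, phiB_add_mul_div hab hj, div_mul_div_comm,
    mul_self_sqrt hba.le]
  rw [← Finset.sum_div, sum_trigMode_mul_trigMode hi hj hij]
  split_ifs
  · field_simp
  · simp

/-- discrete orthonormality of the trigonometric basis at the design
points `x_l = a + l(b−a)/n`, `1 ≤ l ≤ n`, for odd `n`:
`((b−a)/n) Σ_{l=1}^n φ_i(x_l) φ_j(x_l) = δ_{ij}` for `1 ≤ i, j ≤ n`. -/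
theorem stmt11 (a b : ℝ) (hab : a < b) (n : ℕ) (hn : 1 ≤ n) (hodd : Odd n)
    (i j : ℕ) (hi : i ∈ Finset.Icc 1 n) (hj : j ∈ Finset.Icc 1 n) :
    (b - a) / n *
        ∑ l ∈ Finset.Icc 1 n,
          phiB a b i (a + l * (b - a) / n) * phiB a b j (a + l * (b - a) / n)
      = if i = j then 1 else 0 := by
  rw [Finset.mem_Icc] at hi hj
  have hfreq : i / 2 + j / 2 < n := by obtain ⟨k, rfl⟩ := hodd; omega
  exact stmt11_general hab hi.1 hj.1 hfreq
end

section
/- Let G : ℝ → ℝ be a C^∞ nonnegative function supported in [−1,1] with ∫_ℝ G = 1, and for 0 < η < 1 let I_η(x) = η^{−1} ∫_ℝ 1_{[−(1−η), 1−η]}(u) G((u−x)/η) du. Let e_1(x) = 1/√2 and, for j ≥ 2, e_j(x) = Tr_j(π⌊j/2⌋ x), where Tr_j(z) = cos z for even j and Tr_j(z) = sin z for odd j; for an integrable f on [−1,1] set ē_j(f) = ∫_{−1}^1 e_j(v)² f(v) dv. Then lim_{η→0+} sup_{j ≥ 1} | ē_j(I_η²) − 1 | = 0. -/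
open MeasureTheory Real Set Filter

noncomputable section

/-- The mollified indicator `I_η(x) = η⁻¹ ∫ 1_{[−(1−η),1−η]}(u) G((u−x)/η) du`. -/
def Ieta (G : ℝ → ℝ) (η : ℝ) (x : ℝ) : ℝ :=
  η⁻¹ * ∫ u : ℝ, Set.indicator (Set.Icc (-(1 - η)) (1 - η)) (fun _ => (1 : ℝ)) u *
    G ((u - x) / η)

/-- The trigonometric basis `(e_j)_{j ≥ 1}` of `L²[−1,1]`. -/
def ebasis (j : ℕ) (x : ℝ) : ℝ :=
  if j = 1 then 1 / Real.sqrt 2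
  else if Even j then Real.cos (Real.pi * ((j / 2 : ℕ) : ℝ) * x)
  else Real.sin (Real.pi * ((j / 2 : ℕ) : ℝ) * x)

/-- `ē_j(f) = ∫_{−1}^1 e_j(v)² f(v) dv`. -/
def ebar (j : ℕ) (f : ℝ → ℝ) : ℝ := ∫ v in (-1 : ℝ)..1, (ebasis j v) ^ 2 * f v

end

/-!
Substituting `u = x + η y` gives `I_η(x) = ∫ 1_{[−(1−η), 1−η]}(x + η y) G(y) dy`. This is bounded by
`∫ |G|` and, by dominated convergence, tends to `∫ G` for every `x ∈ (−1, 1)`; hence `I_η ^ n` tends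
to `(∫ G) ^ n` in `L¹[−1, 1]`. As `e_j²` takes values in `[0, 1]` and has integral `1`, we have
`|ē_j(f) − c| ≤ ∫_{−1}^1 |f − c|` for every constant `c`, uniformly in `j`.
-/

open scoped Topology

lemma abs_indicator_one_mul_le {α : Type*} (s : Set α) (u : α) (a : ℝ) :
    |s.indicator (fun _ => 1) u * a| ≤ |a| := by
  by_cases hu : u ∈ s <;> simp [hu]

lemma measurable_indicator_one_add_mul {s : Set ℝ} (hs : MeasurableSet s) (η : ℝ) :
    Measurable fun p : ℝ × ℝ => s.indicator (fun _ => (1 : ℝ)) (p.1 + η * p.2) :=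
  (measurable_const.indicator hs).comp (by fun_prop)

section Mollification

variable {G : ℝ → ℝ} {η : ℝ}

lemma Ieta_eq_integral_indicator_comp (G : ℝ → ℝ) (hη : 0 < η) (x : ℝ) :
    Ieta G η x = ∫ y, (Icc (-(1 - η)) (1 - η)).indicator (fun _ => 1) (x + η * y) * G y := by
  set g : ℝ → ℝ := fun y => (Icc (-(1 - η)) (1 - η)).indicator (fun _ => 1) (x + η * y) * G y
  have integrand_eq (u : ℝ) :
      (Icc (-(1 - η)) (1 - η)).indicator (fun _ => (1 : ℝ)) u * G ((u - x) / η) =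
        g ((u - x) / η) := by
    simp only [g, mul_div_cancel₀ _ hη.ne', add_sub_cancel]
  calc Ieta G η x = η⁻¹ * ∫ u, g ((u - x) / η) := by simp only [Ieta, integrand_eq]
    _ = η⁻¹ * ∫ u, g (u / η) := by rw [integral_sub_right_eq_self (fun u => g (u / η)) x]
    _ = ∫ y, g y := by
      rw [Measure.integral_comp_div, abs_of_pos hη, smul_eq_mul, inv_mul_cancel_left₀ hη.ne']

lemma abs_Ieta_le (hG : Integrable G) (hη : 0 < η) (x : ℝ) : |Ieta G η x| ≤ ∫ y, |G y| := by
  rw [Ieta_eq_integral_indicator_comp G hη, ← norm_eq_abs]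
  refine norm_integral_le_of_norm_le hG.abs (ae_of_all _ fun y => ?_)
  exact abs_indicator_one_mul_le _ (x + η * y) (G y)

lemma aestronglyMeasurable_Ieta (hG : AEStronglyMeasurable G) (hη : 0 < η) :
    AEStronglyMeasurable (Ieta G η) := by
  rw [funext (Ieta_eq_integral_indicator_comp G hη)]
  have indicator_meas := measurable_indicator_one_add_mul
    (measurableSet_Icc (a := -(1 - η)) (b := 1 - η)) η
  exact (indicator_meas.aestronglyMeasurable.mul hG.comp_snd).integral_prod_right'

lemma eventually_add_mul_mem_Icc {x : ℝ} (hx : x ∈ Ioo (-1) 1) (y : ℝ) :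
    ∀ᶠ η in 𝓝 (0 : ℝ), x + η * y ∈ Icc (-(1 - η)) (1 - η) := by
  have lower : ∀ᶠ η in 𝓝 (0 : ℝ), -(1 - η) < x + η * y :=
    ContinuousAt.eventually_lt (by fun_prop) (by fun_prop) (by simpa using hx.1)
  have upper : ∀ᶠ η in 𝓝 (0 : ℝ), x + η * y < 1 - η :=
    ContinuousAt.eventually_lt (by fun_prop) (by fun_prop) (by simpa using hx.2)
  filter_upwards [lower, upper] with η hl hu
  exact ⟨hl.le, hu.le⟩

lemma tendsto_Ieta (hG : Integrable G) {x : ℝ} (hx : x ∈ Ioo (-1) 1) :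
    Tendsto (fun η => Ieta G η x) (𝓝[>] 0) (𝓝 (∫ y, G y)) := by
  have substitution : ∀ᶠ η in 𝓝[>] (0 : ℝ),
      ∫ y, (Icc (-(1 - η)) (1 - η)).indicator (fun _ => 1) (x + η * y) * G y = Ieta G η x := by
    filter_upwards [self_mem_nhdsWithin] with η hη
    exact (Ieta_eq_integral_indicator_comp G hη x).symm
  refine Tendsto.congr' substitution
    (tendsto_integral_filter_of_dominated_convergence (fun y => |G y|)
      (.of_forall fun η => ?_)
      (.of_forall fun η => ae_of_all _ fun y => abs_indicator_one_mul_le _ (x + η * y) (G y))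
      hG.abs (ae_of_all _ fun y => ?_))
  · have indicator_meas := (measurable_indicator_one_add_mul
        (measurableSet_Icc (a := -(1 - η)) (b := 1 - η)) η).comp
      (measurable_prodMk_left (x := x))
    exact indicator_meas.aestronglyMeasurable.mul hG.aestronglyMeasurable
  · refine tendsto_const_nhds.congr' ?_
    filter_upwards [nhdsWithin_le_nhds (eventually_add_mul_mem_Icc hx y)] with η hmem
    rw [indicator_of_mem hmem, one_mul]

lemma intervalIntegrable_Ieta_pow (hG : Integrable G) (hη : 0 < η) (n : ℕ) (a b : ℝ) :
    IntervalIntegrable (fun x => Ieta G η x ^ n) volume a b := by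
  refine (intervalIntegrable_const (c := (∫ y, |G y|) ^ n)).mono_fun
    ((aestronglyMeasurable_Ieta hG.aestronglyMeasurable hη).pow n).restrict
    (ae_of_all _ fun x => ?_)
  simp only [norm_pow]
  gcongr
  exact (abs_Ieta_le hG hη x).trans (le_abs_self _)

lemma abs_Ieta_pow_sub_le (hG : Integrable G) (hη : 0 < η) (n : ℕ) (x : ℝ) :
    |Ieta G η x ^ n - (∫ y, G y) ^ n| ≤ 2 * (∫ y, |G y|) ^ n :=
  calc |Ieta G η x ^ n - (∫ y, G y) ^ n| ≤ |Ieta G η x| ^ n + |∫ y, G y| ^ n := by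
        simpa only [abs_pow] using abs_sub (Ieta G η x ^ n) ((∫ y, G y) ^ n)
    _ ≤ (∫ y, |G y|) ^ n + (∫ y, |G y|) ^ n := by
        gcongr
        · exact abs_Ieta_le hG hη x
        · exact abs_integral_le_integral_abs
    _ = 2 * (∫ y, |G y|) ^ n := (two_mul _).symm

lemma tendsto_integral_abs_Ieta_pow_sub (hG : Integrable G) (n : ℕ) :
    Tendsto (fun η => ∫ x in (-1 : ℝ)..1, |Ieta G η x ^ n - (∫ y, G y) ^ n|) (𝓝[>] 0) (𝓝 0) := by
  have hpos : ∀ᶠ η in 𝓝[>] (0 : ℝ), 0 < η := self_mem_nhdsWithin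
  suffices Tendsto (fun η => ∫ x in (-1 : ℝ)..1, |Ieta G η x ^ n - (∫ y, G y) ^ n|) (𝓝[>] 0)
      (𝓝 (∫ _ in (-1 : ℝ)..1, 0)) by
    simpa only [intervalIntegral.integral_zero] using this
  refine intervalIntegral.tendsto_integral_filter_of_dominated_convergence
    (fun _ => 2 * (∫ y, |G y|) ^ n) ?_ ?_ intervalIntegrable_const ?_
  · filter_upwards [hpos] with η hη
    exact (((aestronglyMeasurable_Ieta hG.aestronglyMeasurable hη).pow n).sub
      aestronglyMeasurable_const).norm.restrict
  · filter_upwards [hpos] with η hη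
    refine ae_of_all _ fun x _ => ?_
    rw [norm_eq_abs, abs_abs]
    exact abs_Ieta_pow_sub_le hG hη n x
  · filter_upwards [Measure.ae_ne volume 1] with x hx_ne hx
    rw [uIoc_of_le (by norm_num)] at hx
    have hlim := (tendsto_Ieta hG ⟨hx.1, hx.2.lt_of_ne hx_ne⟩).pow n
    simpa using (hlim.sub_const ((∫ y, G y) ^ n)).abs

end Mollification

lemma integral_cos_sq_pi_mul_nat {k : ℕ} (hk : k ≠ 0) :
    ∫ x in (-1 : ℝ)..1, cos (π * k * x) ^ 2 = 1 := by
  have hsin : sin (π * k) = 0 := by rw [mul_comm, sin_nat_mul_pi]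
  rw [intervalIntegral.integral_comp_mul_left (fun x => cos x ^ 2) (by positivity),
    integral_cos_sq]
  simp only [mul_neg, mul_one, sin_neg, hsin, smul_eq_mul]
  field

lemma integral_sin_sq_pi_mul_nat {k : ℕ} (hk : k ≠ 0) :
    ∫ x in (-1 : ℝ)..1, sin (π * k * x) ^ 2 = 1 := by
  have hsin : sin (π * k) = 0 := by rw [mul_comm, sin_nat_mul_pi]
  rw [intervalIntegral.integral_comp_mul_left (fun x => sin x ^ 2) (by positivity),
    integral_sin_sq]
  simp only [mul_neg, mul_one, sin_neg, hsin, smul_eq_mul]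
  field

lemma continuous_ebasis (j : ℕ) : Continuous (ebasis j) := by
  unfold ebasis
  split_ifs <;> fun_prop

lemma ebasis_sq_le_one (j : ℕ) (x : ℝ) : ebasis j x ^ 2 ≤ 1 := by
  unfold ebasis
  split_ifs
  · norm_num [div_pow]
  · exact cos_sq_le_one _
  · exact sin_sq_le_one _

lemma integral_ebasis_sq {j : ℕ} (hj : 1 ≤ j) : ∫ v in (-1 : ℝ)..1, ebasis j v ^ 2 = 1 := by
  unfold ebasis
  split_ifs with hj_one
  · norm_num [div_pow]
  · exact integral_cos_sq_pi_mul_nat (by lia)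
  · exact integral_sin_sq_pi_mul_nat (by lia)

lemma abs_integral_mul_sub_le {a b : ℝ} (hab : a ≤ b) {w f : ℝ → ℝ}
    (hw : ContinuousOn w (uIcc a b)) (hw_le : ∀ x ∈ Icc a b, |w x| ≤ 1)
    (hw_int : ∫ x in a..b, w x = 1) (hf : IntervalIntegrable f volume a b) (c : ℝ) :
    |(∫ x in a..b, w x * f x) - c| ≤ ∫ x in a..b, |f x - c| := by
  have hdiff : IntervalIntegrable (fun x => f x - c) volume a b :=
    hf.sub intervalIntegrable_const
  have hmean : c = ∫ x in a..b, w x * c := by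
    rw [intervalIntegral.integral_mul_const, hw_int, one_mul]
  calc |(∫ x in a..b, w x * f x) - c| = |∫ x in a..b, w x * (f x - c)| := by
        simp only [mul_sub]
        rw [intervalIntegral.integral_sub (hf.continuousOn_mul hw)
          (intervalIntegrable_const.continuousOn_mul hw), ← hmean]
    _ ≤ ∫ x in a..b, |w x * (f x - c)| := intervalIntegral.abs_integral_le_integral_abs hab
    _ ≤ ∫ x in a..b, |f x - c| := by
        refine intervalIntegral.integral_mono_on hab (hdiff.continuousOn_mul hw).abs hdiff.abs
          fun x hx => ?_
        rw [abs_mul]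
        exact mul_le_of_le_one_left (abs_nonneg _) (hw_le x hx)

lemma abs_ebar_sub_le {j : ℕ} (hj : 1 ≤ j) {f : ℝ → ℝ}
    (hf : IntervalIntegrable f volume (-1) 1) (c : ℝ) :
    |ebar j f - c| ≤ ∫ v in (-1 : ℝ)..1, |f v - c| :=
  abs_integral_mul_sub_le (by norm_num) ((continuous_ebasis j).pow 2).continuousOn
    (fun v _ => (abs_sq (ebasis j v)).trans_le (ebasis_sq_le_one j v)) (integral_ebasis_sq hj) hf c

theorem stmt13_general {G : ℝ → ℝ} (hG : Integrable G) (n : ℕ) :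
    ∀ δ : ℝ, 0 < δ → ∃ η₀ : ℝ, 0 < η₀ ∧ ∀ η : ℝ, 0 < η → η < η₀ →
      ∀ j : ℕ, 1 ≤ j → |ebar j (fun v => Ieta G η v ^ n) - (∫ x, G x) ^ n| ≤ δ := by
  intro δ hδ
  obtain ⟨η₀, hη₀, hsmall⟩ := mem_nhdsGT_iff_exists_Ioo_subset.1
    ((tendsto_integral_abs_Ieta_pow_sub hG n).eventually_le_const hδ)
  exact ⟨η₀, hη₀, fun η hη hlt j hj =>
    (abs_ebar_sub_le hj (intervalIntegrable_Ieta_pow hG hη n _ _) _).trans (hsmall ⟨hη, hlt⟩)⟩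

/-- `lim_{η→0+} sup_{j ≥ 1} |ē_j(I_η²) − 1| = 0`, stated as uniform
convergence over `j ≥ 1`. -/
theorem stmt13 (G : ℝ → ℝ) (hsmooth : ContDiff ℝ (⊤ : ℕ∞) G) (hpos : ∀ x, 0 ≤ G x)
    (hsupp : ∀ x ∉ Set.Icc (-1 : ℝ) 1, G x = 0) (hint : ∫ x : ℝ, G x = 1) :
    ∀ δ : ℝ, 0 < δ → ∃ η₀ : ℝ, 0 < η₀ ∧ ∀ η : ℝ, 0 < η → η < η₀ →
      ∀ j : ℕ, 1 ≤ j → |ebar j (fun v => (Ieta G η v) ^ 2) - 1| ≤ δ := by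
  have hG : Integrable G := .of_integral_ne_zero (hint ▸ one_ne_zero)
  simpa only [hint, one_pow] using stmt13_general hG 2
end
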